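/- There is an absolute constant C ≥ 1 with the following property. Let f : (0, π) → ℝ be locally absolutely continuous with a.e. derivative f′. Then, with values in [0, +∞], C⁻¹ ( ∫_0^π |f′(θ)|² sin θ dθ + ∫_0^π |f(θ)|² (sin θ)⁻¹ dθ ) ≤ ∫_0^π |f′(θ) − (2 cos θ / sin θ) f(θ)|² sin θ dθ + ∫_0^π |f(θ)|² sin θ dθ ≤ C ( ∫_0^π |f′(θ)|² sin θ dθ + ∫_0^π |f(θ)|² (sin θ)⁻¹ dθ ). -/

import Mathlib

open MeasureTheory

/-- `f` is locally absolutely continuous on the set `s` with a.e. derivative `f'`: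
`f'` is integrable on compact subintervals of `s` and the fundamental theorem of
calculus representation holds between any two points of `s`. -/
def LocAC (s : Set ℝ) (f f' : ℝ → ℝ) : Prop :=
  (∀ a ∈ s, ∀ b ∈ s, IntervalIntegrable f' volume a b) ∧
  (∀ a ∈ s, ∀ b ∈ s, f b - f a = ∫ t in a..b, f' t)

/-!
Let `g = f' - k cot θ f` with `k > 0`; the theorem is the case `k = 2`. The pointwise identity
`f'² sin θ + k² cos² θ f² / sin θ = (k cos θ f²)' + g² sin θ + k f² sin θ`
reduces the lower bound to discarding the boundary terms of `k cos θ f²`. They have a favourable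
sign on every `[a, b]` with `0 < a < π / 2 < b < π`, since there `cos b ≤ 0 ≤ cos a`.
The upper bound is pointwise.
-/

open Set Real

section Integration

lemma lintegral_ofReal_le_of_integral_nonpos {α : Type*} [MeasurableSpace α] {μ : Measure α}
    {D : α → ℝ} (hD : Integrable D μ) (hD_int : ∫ x, D x ∂μ ≤ 0) :
    ∫⁻ x, ENNReal.ofReal (D x) ∂μ ≤ ∫⁻ x, ENNReal.ofReal (-D x) ∂μ := by
  rw [integral_eq_lintegral_pos_part_sub_lintegral_neg_part hD, sub_nonpos] at hD_int
  exact (ENNReal.toReal_le_toReal hD.lintegral_lt_top.ne hD.neg.lintegral_lt_top.ne).1 hD_int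

lemma lintegral_ofReal_le_of_le_add_of_integral_nonpos {α : Type*} [MeasurableSpace α]
    {μ : Measure α} {u w D : α → ℝ} (hD : Integrable D μ) (hD_int : ∫ x, D x ∂μ ≤ 0)
    (hu : 0 ≤ᵐ[μ] u) (huw : ∀ᵐ x ∂μ, u x ≤ D x + w x) :
    ∫⁻ x, ENNReal.ofReal (u x) ∂μ ≤ ∫⁻ x, ENNReal.ofReal (w x) ∂μ := by
  have hD_neg : AEMeasurable (fun x ↦ ENNReal.ofReal (-D x)) μ :=
    hD.aemeasurable.neg.ennreal_ofReal
  -- The negative part of `D` goes to the left: `w` may have infinite integral, so nothing involving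
  -- it can be subtracted.
  have h_split : ∀ᵐ x ∂μ, ENNReal.ofReal (u x) + ENNReal.ofReal (-D x) ≤
      ENNReal.ofReal (w x) + ENNReal.ofReal (D x) := by
    filter_upwards [hu, huw] with x hx hxw
    rcases le_total 0 (D x) with hDx | hDx
    · rw [ENNReal.ofReal_of_nonpos (neg_nonpos.2 hDx), add_zero]
      exact (ENNReal.ofReal_le_ofReal (by linarith)).trans ENNReal.ofReal_add_le
    · rw [← ENNReal.ofReal_add hx (neg_nonneg.2 hDx), ENNReal.ofReal_of_nonpos hDx, add_zero]
      exact ENNReal.ofReal_le_ofReal (by linarith)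
  refine ENNReal.le_of_add_le_add_right hD.neg.lintegral_lt_top.ne ?_
  calc ∫⁻ x, ENNReal.ofReal (u x) ∂μ + ∫⁻ x, ENNReal.ofReal (-D x) ∂μ
      = ∫⁻ x, (ENNReal.ofReal (u x) + ENNReal.ofReal (-D x)) ∂μ :=
        (lintegral_add_right' _ hD_neg).symm
    _ ≤ ∫⁻ x, (ENNReal.ofReal (w x) + ENNReal.ofReal (D x)) ∂μ := lintegral_mono_ae h_split
    _ = ∫⁻ x, ENNReal.ofReal (w x) ∂μ + ∫⁻ x, ENNReal.ofReal (D x) ∂μ :=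
        lintegral_add_right' _ hD.aemeasurable.ennreal_ofReal
    _ ≤ ∫⁻ x, ENNReal.ofReal (w x) ∂μ + ∫⁻ x, ENNReal.ofReal (-D x) ∂μ := by
        grw [lintegral_ofReal_le_of_integral_nonpos hD hD_int]

lemma setLIntegral_Ioo_le_of_forall_Ioc_le {μ : Measure ℝ} {α m β : ℝ} (hm : m ∈ Ioo α β)
    {u : ℝ → ENNReal} {I : ENNReal}
    (h : ∀ a ∈ Ioo α m, ∀ b ∈ Ioo m β, ∫⁻ x in Ioc a b, u x ∂μ ≤ I) :
    ∫⁻ x in Ioo α β, u x ∂μ ≤ I := by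
  obtain ⟨a, ha_anti, ha_mem, ha_lim⟩ := exists_seq_strictAnti_tendsto' hm.1
  obtain ⟨b, hb_mono, hb_mem, hb_lim⟩ := exists_seq_strictMono_tendsto' hm.2
  have h_exhaust : Ioo α β ⊆ ⋃ n, Ioc (a n) (b n) := fun x hx ↦ by
    obtain ⟨n, han, hbn⟩ :=
      ((ha_lim.eventually_lt_const hx.1).and (hb_lim.eventually_const_lt hx.2)).exists
    exact mem_iUnion.2 ⟨n, han, hbn.le⟩
  have h_dir : Directed (· ⊆ ·) fun n ↦ Ioc (a n) (b n) :=
    Monotone.directed_le (α := ℕ) (β := Set ℝ) fun _ _ hij ↦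
      Ioc_subset_Ioc (ha_anti.antitone hij) (hb_mono.monotone hij)
  calc ∫⁻ x in Ioo α β, u x ∂μ
      ≤ ∫⁻ x in ⋃ n, Ioc (a n) (b n), u x ∂μ := lintegral_mono_set h_exhaust
    _ = ⨆ n, ∫⁻ x in Ioc (a n) (b n), u x ∂μ := setLIntegral_iUnion_of_directed _ h_dir
    _ ≤ I := iSup_le fun n ↦ h _ (ha_mem n) _ (hb_mem n)

lemma setLIntegral_ofReal_add {α : Type*} [MeasurableSpace α] {μ : Measure α} {s : Set α}
    (hs : MeasurableSet s) {u v : α → ℝ} (hu : ∀ x ∈ s, 0 ≤ u x) (hv : ∀ x ∈ s, 0 ≤ v x)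
    (hv_meas : AEMeasurable v (μ.restrict s)) :
    ∫⁻ x in s, ENNReal.ofReal (u x + v x) ∂μ =
      ∫⁻ x in s, ENNReal.ofReal (u x) ∂μ + ∫⁻ x in s, ENNReal.ofReal (v x) ∂μ := by
  rw [← lintegral_add_right' _ hv_meas.ennreal_ofReal]
  exact setLIntegral_congr_fun hs fun x hx ↦ ENNReal.ofReal_add (hu x hx) (hv x hx)

lemma lintegral_ofReal_const_mul {α : Type*} [MeasurableSpace α] {μ : Measure α} {C : ℝ}
    (hC : 0 ≤ C) (u : α → ℝ) :
    ∫⁻ x, ENNReal.ofReal (C * u x) ∂μ = ENNReal.ofReal C * ∫⁻ x, ENNReal.ofReal (u x) ∂μ := by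
  simp only [ENNReal.ofReal_mul hC]
  exact lintegral_const_mul' _ _ ENNReal.ofReal_ne_top

end Integration

namespace LocAC

variable {s : Set ℝ} {f f' g g' : ℝ → ℝ}

lemma of_hasDerivAt (hs : s.OrdConnected) (hf : ∀ x ∈ s, HasDerivAt f (f' x) x)
    (hf' : ContinuousOn f' s) : LocAC s f f' := by
  have h_int : ∀ a ∈ s, ∀ b ∈ s, IntervalIntegrable f' volume a b := fun a ha b hb ↦
    (hf'.mono (hs.uIcc_subset ha hb)).intervalIntegrable
  exact ⟨h_int, fun a ha b hb ↦ (intervalIntegral.integral_eq_sub_of_hasDerivAt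
    (fun x hx ↦ hf x (hs.uIcc_subset ha hb hx)) (h_int a ha b hb)).symm⟩

lemma exists_absolutelyContinuousOnInterval (h : LocAC s f f') {a b : ℝ} (hab : uIcc a b ⊆ s) :
    ∃ F : ℝ → ℝ, AbsolutelyContinuousOnInterval F a b ∧ EqOn F f (uIcc a b) ∧
      ∀ᵐ x, x ∈ uIcc a b → HasDerivAt F (f' x) x := by
  have ha : a ∈ s := hab left_mem_uIcc
  have h_int := h.1 a ha b (hab right_mem_uIcc)
  refine ⟨fun x ↦ f a + ∫ t in a..x, f' t, ?_, fun x hx ↦ ?_, ?_⟩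
  · exact (contDiffOn_const.absolutelyContinuousOnInterval).add
      (h_int.absolutelyContinuousOnInterval_intervalIntegral left_mem_uIcc)
  · linarith [h.2 a ha x (hab hx)]
  · filter_upwards [h_int.ae_hasDerivAt_integral] with x hx hx_mem
    exact (hx hx_mem a left_mem_uIcc).const_add (f a)

lemma continuousOn_uIcc (h : LocAC s f f') {a b : ℝ} (hab : uIcc a b ⊆ s) :
    ContinuousOn f (uIcc a b) := by
  obtain ⟨F, hF, hFf, -⟩ := h.exists_absolutelyContinuousOnInterval hab
  exact hF.continuousOn.congr hFf.symm

lemma continuousOn (hs : IsOpen s) (h : LocAC s f f') : ContinuousOn f s := fun x hx ↦ by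
  obtain ⟨a, b, hx_mem, h_nhds, h_sub⟩ := exists_Icc_mem_subset_of_mem_nhds (hs.mem_nhds hx)
  rw [← uIcc_of_le (hx_mem.1.trans hx_mem.2)] at h_nhds h_sub
  exact ((h.continuousOn_uIcc h_sub).continuousAt h_nhds).continuousWithinAt

lemma aemeasurable (hs : IsOpen s) (h : LocAC s f f') : AEMeasurable f (volume.restrict s) :=
  (h.continuousOn hs).aemeasurable hs.measurableSet

lemma mul (hs : s.OrdConnected) (hf : LocAC s f f') (hg : LocAC s g g') :
    LocAC s (fun x ↦ f x * g x) (fun x ↦ f' x * g x + f x * g' x) := by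
  refine ⟨fun a ha b hb ↦ ?_, fun a ha b hb ↦ ?_⟩
  · exact ((hf.1 a ha b hb).mul_continuousOn (hg.continuousOn_uIcc (hs.uIcc_subset ha hb))).add
      ((hg.1 a ha b hb).continuousOn_mul (hf.continuousOn_uIcc (hs.uIcc_subset ha hb)))
  · obtain ⟨F, hF, hFf, hF'⟩ := hf.exists_absolutelyContinuousOnInterval (hs.uIcc_subset ha hb)
    obtain ⟨G, hG, hGg, hG'⟩ := hg.exists_absolutelyContinuousOnInterval (hs.uIcc_subset ha hb)
    have h_deriv : ∀ᵐ x, x ∈ uIoc a b →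
        deriv (F * G) x = f' x * g x + f x * g' x := by
      filter_upwards [hF', hG'] with x hFx hGx hx
      have hx' := uIoc_subset_uIcc hx
      rw [((hFx hx').mul (hGx hx')).deriv, hFf hx', hGg hx']
    rw [← intervalIntegral.integral_congr_ae h_deriv, (hF.mul hG).integral_deriv_eq_sub]
    simp only [Pi.mul_apply, hFf left_mem_uIcc, hFf right_mem_uIcc, hGg left_mem_uIcc,
      hGg right_mem_uIcc]

lemma const_mul_cos_mul_sq (hs : s.OrdConnected) (h : LocAC s f f') (a : ℝ) :
    LocAC s (fun θ ↦ a * cos θ * (f θ) ^ 2)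
      (fun θ ↦ a * (2 * cos θ * f θ * f' θ - sin θ * (f θ) ^ 2)) := by
  have h_cos : LocAC s (fun θ ↦ a * cos θ) (fun θ ↦ a * -sin θ) :=
    .of_hasDerivAt hs (fun θ _ ↦ (hasDerivAt_cos θ).const_mul a) (by fun_prop)
  convert h_cos.mul hs (h.mul hs h) using 2 <;> ring

lemma setLIntegral_Ioo_le_of_le_deriv_add {α m β : ℝ} (hm : m ∈ Ioo α β) {H D u w : ℝ → ℝ}
    (hHD : LocAC (Ioo α β) H D) (hH : ∀ a ∈ Ioo α m, ∀ b ∈ Ioo m β, H b ≤ H a)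
    (hu : ∀ x ∈ Ioo α β, 0 ≤ u x) (huw : ∀ x ∈ Ioo α β, u x ≤ D x + w x) :
    ∫⁻ x in Ioo α β, ENNReal.ofReal (u x) ≤ ∫⁻ x in Ioo α β, ENNReal.ofReal (w x) := by
  refine setLIntegral_Ioo_le_of_forall_Ioc_le hm fun a ha b hb ↦ ?_
  have hab : a ≤ b := (ha.2.trans hb.1).le
  have ha_mem : a ∈ Ioo α β := ⟨ha.1, ha.2.trans hm.2⟩
  have hb_mem : b ∈ Ioo α β := ⟨hm.1.trans hb.1, hb.2⟩
  have h_sub : Ioc a b ⊆ Ioo α β := Ioc_subset_Icc_self.trans (ordConnected_Ioo.out ha_mem hb_mem)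
  have hD_int : ∫ x in Ioc a b, D x ≤ 0 := by
    rw [← intervalIntegral.integral_of_le hab, ← hHD.2 a ha_mem b hb_mem, sub_nonpos]
    exact hH a ha b hb
  have h_ae : ∀ᵐ x ∂volume.restrict (Ioc a b), x ∈ Ioc a b := ae_restrict_mem measurableSet_Ioc
  calc ∫⁻ x in Ioc a b, ENNReal.ofReal (u x)
      ≤ ∫⁻ x in Ioc a b, ENNReal.ofReal (w x) :=
        lintegral_ofReal_le_of_le_add_of_integral_nonpos (hHD.1 a ha_mem b hb_mem).1 hD_int
          (h_ae.mono fun x hx ↦ hu x (h_sub hx)) (h_ae.mono fun x hx ↦ huw x (h_sub hx))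
    _ ≤ ∫⁻ x in Ioo α β, ENNReal.ofReal (w x) := lintegral_mono_set h_sub

end LocAC

section Pointwise

-- At `s = sin θ`, `c = cos θ`, `x = f θ`, `y = f' θ` the first bracket is `(cos θ f²)'`.
lemma deriv_sq_add_cot_sq_eq {s : ℝ} (hs : s ≠ 0) (k c x y : ℝ) :
    y ^ 2 * s + k ^ 2 * (c ^ 2 * x ^ 2 * s⁻¹) =
      k * (2 * c * x * y - s * x ^ 2) + ((y - k * c / s * x) ^ 2 * s + k * (x ^ 2 * s)) := by
  field_simp
  ring

lemma sq_mul_inv_sin_eq {θ : ℝ} (hθ : sin θ ≠ 0) (x : ℝ) :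
    x ^ 2 * (sin θ)⁻¹ = cos θ ^ 2 * x ^ 2 * (sin θ)⁻¹ + x ^ 2 * sin θ := by
  field_simp
  rw [cos_sq_add_sin_sq, mul_one]

lemma twisted_density_le {θ : ℝ} (hθ : 0 < sin θ) (k x y : ℝ) :
    (y - k * cos θ / sin θ * x) ^ 2 * sin θ + x ^ 2 * sin θ ≤
      (2 + 2 * k ^ 2) * (y ^ 2 * sin θ + x ^ 2 * (sin θ)⁻¹) := by
  have h_sq : (y - k * cos θ / sin θ * x) ^ 2 * sin θ ≤
      2 * (y ^ 2 * sin θ) + 2 * k ^ 2 * (cos θ ^ 2 * x ^ 2 * (sin θ)⁻¹) := by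
    have h_nonneg : 0 ≤ (y + k * cos θ / sin θ * x) ^ 2 * sin θ := by positivity
    have h_parallelogram : (y - k * cos θ / sin θ * x) ^ 2 * sin θ +
        (y + k * cos θ / sin θ * x) ^ 2 * sin θ =
          2 * (y ^ 2 * sin θ) + 2 * k ^ 2 * (cos θ ^ 2 * x ^ 2 * (sin θ)⁻¹) := by
      field_simp
      ring
    linarith
  have h_cot : 0 ≤ cos θ ^ 2 * x ^ 2 * (sin θ)⁻¹ := by positivity
  have h_deriv : 0 ≤ k ^ 2 * (y ^ 2 * sin θ) := by positivity
  have h_low : 0 ≤ x ^ 2 * sin θ := by positivity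
  have h_low_scaled : 0 ≤ k ^ 2 * (x ^ 2 * sin θ) := by positivity
  rw [sq_mul_inv_sin_eq hθ.ne']
  linarith

lemma hardy_density_le {θ : ℝ} (hθ : 0 < sin θ) {k : ℝ} (hk : 0 < k) (x y : ℝ) :
    y ^ 2 * sin θ + x ^ 2 * (sin θ)⁻¹ ≤
      (1 + (k ^ 2)⁻¹) * k * (2 * cos θ * x * y - sin θ * x ^ 2) +
        (1 + (1 + (k ^ 2)⁻¹) * (1 + k)) *
          ((y - k * cos θ / sin θ * x) ^ 2 * sin θ + x ^ 2 * sin θ) := by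
  have h_identity := deriv_sq_add_cot_sq_eq hθ.ne' k (cos θ) x y
  rw [sq_mul_inv_sin_eq hθ.ne']
  set K := cos θ ^ 2 * x ^ 2 * (sin θ)⁻¹
  have hK : 0 ≤ k ^ 2 * K := by positivity
  have hY : 0 ≤ (k ^ 2)⁻¹ * (y ^ 2 * sin θ) := by positivity
  calc y ^ 2 * sin θ + (K + x ^ 2 * sin θ)
      ≤ (1 + (k ^ 2)⁻¹) * (y ^ 2 * sin θ + k ^ 2 * K) + x ^ 2 * sin θ := by
        have h_cancel : (k ^ 2)⁻¹ * (k ^ 2 * K) = K := inv_mul_cancel_left₀ (by positivity) K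
        linarith
    _ = (1 + (k ^ 2)⁻¹) * k * (2 * cos θ * x * y - sin θ * x ^ 2) +
          ((1 + (k ^ 2)⁻¹) * ((y - k * cos θ / sin θ * x) ^ 2 * sin θ + k * (x ^ 2 * sin θ)) +
            x ^ 2 * sin θ) := by
        rw [h_identity]; ring
    _ ≤ _ := by
        gcongr
        have h_slack : 0 ≤ (1 + (k ^ 2)⁻¹) *
            (k * ((y - k * cos θ / sin θ * x) ^ 2 * sin θ) + x ^ 2 * sin θ) +
              (y - k * cos θ / sin θ * x) ^ 2 * sin θ := by positivity
        linarith

end Pointwise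

section Energy

variable {f f' : ℝ → ℝ} {k : ℝ}

/-- The energy `∫₀^π f'² sin θ + ∫₀^π f² / sin θ`, which controls `f'` and the singular
potential term separately; it takes values in `[0, ∞]`. -/
noncomputable def hardyEnergy (f f' : ℝ → ℝ) : ENNReal :=
  (∫⁻ θ in Ioo 0 π, ENNReal.ofReal ((f' θ) ^ 2 * sin θ)) +
    ∫⁻ θ in Ioo 0 π, ENNReal.ofReal ((f θ) ^ 2 * (sin θ)⁻¹)

/-- The energy `∫₀^π (f' - k cot θ f)² sin θ + ∫₀^π f² sin θ` of the twisted derivative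
`f' - k cot θ f`, with a nonsingular zeroth-order term; it takes values in `[0, ∞]`. -/
noncomputable def twistedEnergy (k : ℝ) (f f' : ℝ → ℝ) : ENNReal :=
  (∫⁻ θ in Ioo 0 π, ENNReal.ofReal ((f' θ - k * cos θ / sin θ * f θ) ^ 2 * sin θ)) +
    ∫⁻ θ in Ioo 0 π, ENNReal.ofReal ((f θ) ^ 2 * sin θ)

lemma hardyEnergy_eq_lintegral (hf : AEMeasurable f (volume.restrict (Ioo 0 π))) :
    hardyEnergy f f' =
      ∫⁻ θ in Ioo 0 π, ENNReal.ofReal ((f' θ) ^ 2 * sin θ + (f θ) ^ 2 * (sin θ)⁻¹) :=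
  (setLIntegral_ofReal_add measurableSet_Ioo
    (fun _ hθ ↦ mul_nonneg (sq_nonneg _) (sin_pos_of_mem_Ioo hθ).le)
    (fun _ hθ ↦ mul_nonneg (sq_nonneg _) (inv_nonneg.2 (sin_pos_of_mem_Ioo hθ).le))
    (by fun_prop)).symm

lemma twistedEnergy_eq_lintegral (hf : AEMeasurable f (volume.restrict (Ioo 0 π))) :
    twistedEnergy k f f' = ∫⁻ θ in Ioo 0 π,
      ENNReal.ofReal ((f' θ - k * cos θ / sin θ * f θ) ^ 2 * sin θ + (f θ) ^ 2 * sin θ) :=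
  (setLIntegral_ofReal_add measurableSet_Ioo
    (fun _ hθ ↦ mul_nonneg (sq_nonneg _) (sin_pos_of_mem_Ioo hθ).le)
    (fun _ hθ ↦ mul_nonneg (sq_nonneg _) (sin_pos_of_mem_Ioo hθ).le)
    (by fun_prop)).symm

lemma twistedEnergy_le_hardyEnergy (hf : AEMeasurable f (volume.restrict (Ioo 0 π))) :
    twistedEnergy k f f' ≤ ENNReal.ofReal (2 + 2 * k ^ 2) * hardyEnergy f f' := by
  rw [twistedEnergy_eq_lintegral hf, hardyEnergy_eq_lintegral hf,
    ← lintegral_ofReal_const_mul (by positivity)]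
  exact setLIntegral_mono' measurableSet_Ioo fun θ hθ ↦
    ENNReal.ofReal_le_ofReal (twisted_density_le (sin_pos_of_mem_Ioo hθ) k _ _)

lemma hardyEnergy_le_twistedEnergy (hk : 0 < k) (h : LocAC (Ioo 0 π) f f') :
    hardyEnergy f f' ≤
      ENNReal.ofReal (1 + (1 + (k ^ 2)⁻¹) * (1 + k)) * twistedEnergy k f f' := by
  have hf := h.aemeasurable isOpen_Ioo
  rw [hardyEnergy_eq_lintegral hf, twistedEnergy_eq_lintegral hf,
    ← lintegral_ofReal_const_mul (by positivity)]
  have hH := h.const_mul_cos_mul_sq ordConnected_Ioo ((1 + (k ^ 2)⁻¹) * k)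
  have hm : π / 2 ∈ Ioo 0 π := ⟨by positivity, by linarith [pi_pos]⟩
  refine hH.setLIntegral_Ioo_le_of_le_deriv_add hm (fun a ha b hb ↦ ?_) (fun θ hθ ↦ ?_)
    fun θ hθ ↦ hardy_density_le (sin_pos_of_mem_Ioo hθ) hk _ _
  · have h_cos_a : 0 ≤ cos a := cos_nonneg_of_mem_Icc ⟨by linarith [ha.1, pi_pos], ha.2.le⟩
    have h_cos_b : cos b ≤ 0 :=
      cos_nonpos_of_pi_div_two_le_of_le hb.1.le (by linarith [hb.2, pi_pos])
    calc (1 + (k ^ 2)⁻¹) * k * cos b * f b ^ 2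
        ≤ 0 := mul_nonpos_of_nonpos_of_nonneg
          (mul_nonpos_of_nonneg_of_nonpos (by positivity) h_cos_b) (sq_nonneg _)
      _ ≤ (1 + (k ^ 2)⁻¹) * k * cos a * f a ^ 2 := by positivity
  · have h_sin := sin_pos_of_mem_Ioo hθ
    positivity

end Energy

theorem hardy_twisted_comparison_general {k : ℝ} (hk : 0 < k) :
    ∃ C : ℝ, 1 ≤ C ∧ ∀ f f' : ℝ → ℝ, LocAC (Ioo 0 π) f f' →
      (ENNReal.ofReal C)⁻¹ * hardyEnergy f f' ≤ twistedEnergy k f f' ∧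
        twistedEnergy k f f' ≤ ENNReal.ofReal C * hardyEnergy f f' := by
  set L := 1 + (1 + (k ^ 2)⁻¹) * (1 + k)
  set U := 2 + 2 * k ^ 2
  have hL : 1 ≤ L := le_add_of_nonneg_right (by positivity)
  have hC : 1 ≤ max L U := le_max_of_le_left hL
  refine ⟨max L U, hC, fun f f' h ↦ ⟨?_, ?_⟩⟩
  · rw [ENNReal.inv_mul_le_iff (ENNReal.ofReal_pos.2 (by linarith)).ne' ENNReal.ofReal_ne_top]
    exact (hardyEnergy_le_twistedEnergy hk h).trans (by gcongr; exact le_max_left L U)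
  · exact (twistedEnergy_le_hardyEnergy (h.aemeasurable isOpen_Ioo)).trans
      (by gcongr; exact le_max_right L U)

/-- Two-sided Hardy-type comparison of Lemma A.2 (iii):
`∫ (f')² sin θ + ∫ f² (sin θ)⁻¹ ≈ ∫ (f' − (2cos θ/sin θ) f)² sin θ + ∫ f² sin θ`. -/
theorem hardy_twisted_comparison :
    ∃ C : ℝ, 1 ≤ C ∧
      ∀ f f' : ℝ → ℝ, LocAC (Set.Ioo 0 Real.pi) f f' →
        (ENNReal.ofReal C)⁻¹ *
            ((∫⁻ θ in Set.Ioo 0 Real.pi, ENNReal.ofReal ((f' θ) ^ 2 * Real.sin θ)) +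
             (∫⁻ θ in Set.Ioo 0 Real.pi, ENNReal.ofReal ((f θ) ^ 2 * (Real.sin θ)⁻¹))) ≤
          (∫⁻ θ in Set.Ioo 0 Real.pi,
              ENNReal.ofReal ((f' θ - 2 * Real.cos θ / Real.sin θ * f θ) ^ 2 * Real.sin θ)) +
          (∫⁻ θ in Set.Ioo 0 Real.pi, ENNReal.ofReal ((f θ) ^ 2 * Real.sin θ)) ∧
        (∫⁻ θ in Set.Ioo 0 Real.pi,
            ENNReal.ofReal ((f' θ - 2 * Real.cos θ / Real.sin θ * f θ) ^ 2 * Real.sin θ)) +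
          (∫⁻ θ in Set.Ioo 0 Real.pi, ENNReal.ofReal ((f θ) ^ 2 * Real.sin θ)) ≤
          ENNReal.ofReal C *
            ((∫⁻ θ in Set.Ioo 0 Real.pi, ENNReal.ofReal ((f' θ) ^ 2 * Real.sin θ)) +
             (∫⁻ θ in Set.Ioo 0 Real.pi, ENNReal.ofReal ((f θ) ^ 2 * (Real.sin θ)⁻¹))) :=
  hardy_twisted_comparison_general two_pos
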